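/- (Theorem 4, set characterization) Under the standing assumptions on the global optimization problem, assume the problem is solvable. Then a vector x̃ : Fin n → ℝ is a globally optimal solution if and only if (x̃_j : EReal) ≤ x*_j(A,b) for all j with k_j = 0 and (x̃_j : EReal) = x*_j(A,b) for all j with k_j > 0; i.e., the set of all globally optimal solutions equals S = {x̃ | x̃_j ≤ x*_j if k_j = 0 and x̃_j = x*_j if k_j > 0}. -/

import Mathlib

open scoped BigOperators

noncomputable section

/-- Max-plus product: `(A ⊗ x)_i = ⨆_j (A i j + x_j)` in `EReal`. -/
def maxPlus {m n : ℕ} (A : Matrix (Fin m) (Fin n) EReal) (x : Fin n → EReal)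
    (i : Fin m) : EReal :=
  ⨆ j, A i j + x j

/-- Auxiliary subtraction: `s(b,a) = +∞` if `a = -∞`, else `b - a`. -/
def sSub (b a : EReal) : EReal := if a = ⊥ then ⊤ else b - a

/-- Greatest subsolution `x*(A,b)_j = ⨅_i s(b_i, A i j)`. -/
def xstar {m n : ℕ} (A : Matrix (Fin m) (Fin n) EReal) (b : Fin m → EReal)
    (j : Fin n) : EReal :=
  ⨅ i, sSub (b i) (A i j)

/-- Objective function `F(x)_i = ⨆_j (A i j + x_j)` for real vectors `x`. -/
def objF {m n : ℕ} (A : Matrix (Fin m) (Fin n) EReal) (x : Fin n → ℝ)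
    (i : Fin m) : EReal :=
  ⨆ j, A i j + (x j : EReal)

/-- `J = {j | k_j > 0}` as a finite set. -/
def Jset {n : ℕ} (k : Fin n → ℝ) : Finset (Fin n) :=
  Finset.univ.filter (fun j => 0 < k j)

/-- Greatest lower bound `b_i = ((∑_{j ∈ J} k_j * A i j) + c) / (∑_{j ∈ J} k_j)`. -/
def glb {m n : ℕ} (A : Matrix (Fin m) (Fin n) EReal) (k : Fin n → ℝ) (c : ℝ)
    (i : Fin m) : EReal :=
  ((∑ j ∈ Jset k, (k j : EReal) * A i j) + (c : EReal)) /
    ((∑ j ∈ Jset k, k j : ℝ) : EReal)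

/-- `xt` is a globally optimal solution of the problem `(A, k, c)`. -/
def IsOptimal {m n : ℕ} (A : Matrix (Fin m) (Fin n) EReal) (k : Fin n → ℝ)
    (c : ℝ) (xt : Fin n → ℝ) : Prop :=
  (∑ j, k j * xt j = c) ∧
    ∀ x : Fin n → ℝ, (∑ j, k j * x j = c) → ∀ i, objF A xt i ≤ objF A x i

/-!
`b = glb A k c` is componentwise the infimum of the objective over the constraint set, so a feasible
`x` is optimal exactly when `F(x) ≤ b`, which by max-plus residuation means `x ≤ x*(A,b)`.
No `y ≤ x*(A,b)` can have `∑ j, k j * y j > c`: in a row where `b` is finite, `F(y) ≤ b` would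
contradict the strict monotonicity of the infimum in `c`. Hence a solution cannot be increased at a
coordinate of positive weight while staying below `x*(A,b)`, and so coincides with `x*(A,b)` there.
Conversely, a vector `x ≤ x*(A,b)` with these coordinates has the same weighted sum as any solution,
so it is feasible.
-/

section WeightedSums

variable {ι : Type*}

lemma ereal_coe_sum (s : Finset ι) (f : ι → ℝ) :
    ((∑ j ∈ s, f j : ℝ) : EReal) = ∑ j ∈ s, (f j : EReal) :=
  map_sum (⟨⟨Real.toEReal, EReal.coe_zero⟩, EReal.coe_add⟩ : ℝ →+ EReal) f s

lemma ereal_sum_eq_bot {s : Finset ι} {f : ι → EReal} {j : ι} (hj : j ∈ s) (hf : f j = ⊥) :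
    ∑ l ∈ s, f l = ⊥ := by
  classical
  rw [← Finset.add_sum_erase s f hj, hf, EReal.bot_add]

lemma sum_mul_update [Fintype ι] [DecidableEq ι] {R : Type*} [CommRing R] (k y : ι → R) (j : ι)
    (t : R) :
    ∑ l, k l * Function.update y j t l = ∑ l, k l * y l + k j * (t - y j) := by
  simp only [Pi.update_eq_sub_add_single, Pi.add_apply, Pi.sub_apply, Pi.single_apply, mul_add,
    mul_sub, mul_ite, mul_zero, Finset.sum_add_distrib, Finset.sum_sub_distrib,
    Finset.sum_ite_eq', Finset.mem_univ, if_true]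
  ring

end WeightedSums

section Residuation

variable {m n : ℕ} {A : Matrix (Fin m) (Fin n) EReal}

lemma add_le_iff_le_sSub {a : EReal} (ha : a ≠ ⊤) (x b : EReal) : a + x ≤ b ↔ x ≤ sSub b a := by
  by_cases hbot : a = ⊥
  · simp [sSub, hbot]
  · rw [sSub, if_neg hbot, EReal.le_sub_iff_add_le (.inl hbot) (.inl ha), add_comm]

lemma gc_maxPlus_xstar (hA : ∀ i j, A i j ≠ ⊤) : GaloisConnection (maxPlus A) (xstar A) := by
  intro x b
  simp only [Pi.le_def, maxPlus, xstar, iSup_le_iff, le_iInf_iff, add_le_iff_le_sSub (hA _ _)]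
  exact forall_comm

lemma objF_le_iff_le_xstar (hA : ∀ i j, A i j ≠ ⊤) (x : Fin n → ℝ) (b : Fin m → EReal) :
    (∀ i, objF A x i ≤ b i) ↔ ∀ j, (x j : EReal) ≤ xstar A b j :=
  gc_maxPlus_xstar hA (fun j => (x j : EReal)) b

lemma objF_le_coe_iff (x : Fin n → ℝ) (i : Fin m) (r : ℝ) :
    objF A x i ≤ r ↔ ∀ j, A i j ≤ ((r - x j : ℝ) : EReal) := by
  simp only [objF, iSup_le_iff, EReal.coe_sub]
  exact forall_congr' fun j => (EReal.le_sub_iff_add_le (.inl (EReal.coe_ne_bot _))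
    (.inl (EReal.coe_ne_top _))).symm

lemma objF_ne_bot {i : Fin m} {j : Fin n} (hij : A i j ≠ ⊥) (x : Fin n → ℝ) : objF A x i ≠ ⊥ :=
  ne_bot_of_le_ne_bot (EReal.add_ne_bot_iff.mpr ⟨hij, EReal.coe_ne_bot _⟩)
    (le_iSup (fun j => A i j + (x j : EReal)) j)

end Residuation

/-- The constraint set `𝒳` of the problem: the vectors whose `k`-weighted sum is `c`. -/
def constraintSet {ι : Type*} [Fintype ι] (k : ι → ℝ) (c : ℝ) : Set (ι → ℝ) :=
  {x | ∑ j, k j * x j = c}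

lemma mem_constraintSet {ι : Type*} [Fintype ι] {k : ι → ℝ} {c : ℝ} {x : ι → ℝ} :
    x ∈ constraintSet k c ↔ ∑ j, k j * x j = c :=
  Iff.rfl

section Infimum

variable {m n : ℕ} {A B : Matrix (Fin m) (Fin n) EReal} {k : Fin n → ℝ} {c : ℝ} {i : Fin m}

lemma mem_Jset {j : Fin n} : j ∈ Jset k ↔ 0 < k j := by
  simp [Jset]

lemma sum_Jset_mul (hk : ∀ j, 0 ≤ k j) (f : Fin n → ℝ) :
    ∑ j ∈ Jset k, k j * f j = ∑ j, k j * f j :=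
  Finset.sum_filter_of_ne fun j _ hj => (hk j).lt_of_ne' (left_ne_zero_of_mul hj)

lemma sum_Jset (hk : ∀ j, 0 ≤ k j) : ∑ j ∈ Jset k, k j = ∑ j, k j := by
  simpa only [mul_one] using sum_Jset_mul hk fun _ => 1

lemma glb_mono (hAB : ∀ j, 0 < k j → A i j ≤ B i j) : glb A k c i ≤ glb B k c i := by
  refine EReal.div_le_div_right_of_nonneg ?_
    (add_le_add_left (Finset.sum_le_sum fun j hj => ?_) _)
  · exact EReal.coe_nonneg.mpr (Finset.sum_nonneg fun j hj => (mem_Jset.mp hj).le)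
  · have hj : 0 < k j := mem_Jset.mp hj
    exact mul_le_mul_of_nonneg_left (hAB j hj) (EReal.coe_nonneg.mpr hj.le)

lemma glb_eq_coe (hk : ∀ j, 0 ≤ k j) {a : Fin n → ℝ} (ha : ∀ j, 0 < k j → A i j = a j) :
    glb A k c i = (((∑ j, k j * a j + c) / ∑ j, k j : ℝ) : EReal) := by
  have weighted_row : ∑ j ∈ Jset k, (k j : EReal) * A i j = ((∑ j, k j * a j : ℝ) : EReal) := by
    rw [← sum_Jset_mul hk, ereal_coe_sum]
    exact Finset.sum_congr rfl fun j hj => by rw [ha j (mem_Jset.mp hj), EReal.coe_mul]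
  rw [glb, weighted_row, sum_Jset hk, ← EReal.coe_add, EReal.coe_div]

lemma glb_eq_bot {j : Fin n} (hj : 0 < k j) (hij : A i j = ⊥) : glb A k c i = ⊥ := by
  have weighted_row : ∑ l ∈ Jset k, (k l : EReal) * A i l = ⊥ :=
    ereal_sum_eq_bot (mem_Jset.mpr hj) (by rw [hij, EReal.coe_mul_bot_of_pos hj])
  have total_pos : 0 < ∑ l ∈ Jset k, k l :=
    Finset.sum_pos (fun _ => mem_Jset.mp) ⟨j, mem_Jset.mpr hj⟩
  rw [glb, weighted_row, EReal.bot_add,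
    EReal.bot_div_of_pos_ne_top (EReal.coe_pos.mpr total_pos) (EReal.coe_ne_top _)]

lemma glb_eq_coe_toReal (hA : ∀ j, A i j ≠ ⊤) (hk : ∀ j, 0 ≤ k j)
    (hreal : ∀ j, 0 < k j → A i j ≠ ⊥) :
    glb A k c i = (((∑ j, k j * (A i j).toReal + c) / ∑ j, k j : ℝ) : EReal) :=
  glb_eq_coe hk fun j hj => (EReal.coe_toReal (hA j) (hreal j hj)).symm

lemma glb_le_glb_iff (hA : ∀ j, A i j ≠ ⊤) (hk : ∀ j, 0 ≤ k j) (hk_sum : 0 < ∑ j, k j)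
    (hreal : ∀ j, 0 < k j → A i j ≠ ⊥) {c₁ c₂ : ℝ} :
    glb A k c₁ i ≤ glb A k c₂ i ↔ c₁ ≤ c₂ := by
  rw [glb_eq_coe_toReal hA hk hreal, glb_eq_coe_toReal hA hk hreal, EReal.coe_le_coe_iff,
    div_le_div_iff_of_pos_right hk_sum, add_le_add_iff_left]

lemma glb_le_objF (hk : ∀ j, 0 ≤ k j) (hk_sum : 0 < ∑ j, k j) {x : Fin n → ℝ}
    (hx : x ∈ constraintSet k c) (i : Fin m) : glb A k c i ≤ objF A x i := by
  refine EReal.le_of_forall_lt_iff_le.mp fun r hr => ?_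
  calc glb A k c i ≤ glb (fun _ j => ((r - x j : ℝ) : EReal)) k c i :=
        glb_mono fun j _ => (objF_le_coe_iff x i r).mp hr.le j
    _ = (((∑ j, k j * (r - x j) + c) / ∑ j, k j : ℝ) : EReal) := glb_eq_coe hk fun _ _ => rfl
    _ = r := by
        simp only [mul_sub, Finset.sum_sub_distrib, mem_constraintSet.mp hx, sub_add_cancel,
          ← Finset.sum_mul]
        rw [mul_div_cancel_left₀ r hk_sum.ne']

lemma exists_objF_le_glb (hA : ∀ j, A i j ≠ ⊤) (hk : ∀ j, 0 ≤ k j) (hk_sum : 0 < ∑ j, k j)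
    (hreal : ∀ j, 0 < k j → A i j ≠ ⊥) : ∃ x ∈ constraintSet k c, objF A x i ≤ glb A k c i := by
  rw [glb_eq_coe_toReal hA hk hreal]
  set β : ℝ := (∑ j, k j * (A i j).toReal + c) / ∑ j, k j
  refine ⟨fun j => β - (A i j).toReal, ?_, (objF_le_coe_iff _ i β).mpr fun j => ?_⟩
  · have weighted_β : (∑ j, k j) * β = ∑ j, k j * (A i j).toReal + c :=
      mul_div_cancel₀ _ hk_sum.ne'
    rw [mem_constraintSet]
    simp only [mul_sub, Finset.sum_sub_distrib, ← Finset.sum_mul, weighted_β,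
      add_sub_cancel_left]
  · rw [sub_sub_cancel]
    exact EReal.le_coe_toReal (hA j)

-- A coordinate that is invisible in row `i` but has positive weight absorbs the whole constraint.
lemma exists_objF_le_of_eq_bot (hA : ∀ j, A i j ≠ ⊤) {j : Fin n} (hj : k j ≠ 0)
    (hij : A i j = ⊥) (c r : ℝ) : ∃ x ∈ constraintSet k c, objF A x i ≤ r := by
  set y : Fin n → ℝ := fun l => r - (A i l).toReal
  refine ⟨Function.update y j (y j + (c - ∑ l, k l * y l) / k j), ?_,
    (objF_le_coe_iff _ i r).mpr fun l => ?_⟩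
  · rw [mem_constraintSet, sum_mul_update, add_sub_cancel_left,
      mul_div_cancel₀ _ hj, add_sub_cancel]
  · rcases eq_or_ne l j with rfl | hl
    · simp [hij]
    · rw [Function.update_of_ne hl, sub_sub_cancel]
      exact EReal.le_coe_toReal (hA l)

lemma isGLB_glb (hA : ∀ j, A i j ≠ ⊤) (hk : ∀ j, 0 ≤ k j) (hk_sum : 0 < ∑ j, k j) (c : ℝ) :
    IsGLB ((fun x => objF A x i) '' constraintSet k c) (glb A k c i) := by
  refine ⟨Set.forall_mem_image.mpr fun x hx => glb_le_objF hk hk_sum hx i, fun e he => ?_⟩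
  have le_objF : ∀ x ∈ constraintSet k c, e ≤ objF A x i := Set.forall_mem_image.mp he
  by_cases hbot : ∃ j, 0 < k j ∧ A i j = ⊥
  · obtain ⟨j, hj, hij⟩ := hbot
    rw [glb_eq_bot hj hij]
    refine EReal.le_of_forall_lt_iff_le.mp fun r _ => ?_
    obtain ⟨x, hx, hxr⟩ := exists_objF_le_of_eq_bot hA hj.ne' hij c r
    exact (le_objF x hx).trans hxr
  · push Not at hbot
    obtain ⟨x, hx, hx_le⟩ := exists_objF_le_glb hA hk hk_sum hbot
    exact (le_objF x hx).trans hx_le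

end Infimum

section Optimality

variable {m n : ℕ} {A : Matrix (Fin m) (Fin n) EReal} {k : Fin n → ℝ} {c : ℝ} {i : Fin m}

theorem isOptimal_iff_le_xstar (hA : ∀ i j, A i j ≠ ⊤) (hk : ∀ j, 0 ≤ k j)
    (hk_sum : 0 < ∑ j, k j) {x : Fin n → ℝ} :
    IsOptimal A k c x ↔
      x ∈ constraintSet k c ∧ ∀ j, (x j : EReal) ≤ xstar A (glb A k c) j := by
  refine and_congr_right fun _ => ?_
  calc (∀ y ∈ constraintSet k c, ∀ i, objF A x i ≤ objF A y i)
      ↔ ∀ i, ∀ y ∈ constraintSet k c, objF A x i ≤ objF A y i :=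
        ⟨fun h i y hy => h y hy i, fun h y hy i => h i y hy⟩
    _ ↔ ∀ i, objF A x i ≤ glb A k c i := forall_congr' fun i => by
        rw [le_isGLB_iff (isGLB_glb (hA i) hk hk_sum c), mem_lowerBounds, Set.forall_mem_image]
    _ ↔ ∀ j, (x j : EReal) ≤ xstar A (glb A k c) j := objF_le_iff_le_xstar hA x _

lemma sum_mul_le_of_le_xstar (hA : ∀ i j, A i j ≠ ⊤) (hk : ∀ j, 0 ≤ k j)
    (hk_sum : 0 < ∑ j, k j) (hreal : ∀ j, 0 < k j → A i j ≠ ⊥) {y : Fin n → ℝ}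
    (hy : ∀ j, (y j : EReal) ≤ xstar A (glb A k c) j) : ∑ j, k j * y j ≤ c :=
  (glb_le_glb_iff (hA i) hk hk_sum hreal).mp <|
    (glb_le_objF hk hk_sum (mem_constraintSet.mpr rfl) i).trans
      ((objF_le_iff_le_xstar hA y _).mpr hy i)

lemma IsOptimal.ne_bot_of_pos (hA : ∀ i j, A i j ≠ ⊤) (hk : ∀ j, 0 ≤ k j)
    (hk_sum : 0 < ∑ j, k j) {x : Fin n → ℝ} (hx : IsOptimal A k c x) {l : Fin n}
    (hil : A i l ≠ ⊥) {j : Fin n} (hj : 0 < k j) : A i j ≠ ⊥ := by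
  intro hij
  have objF_le : objF A x i ≤ glb A k c i :=
    (objF_le_iff_le_xstar hA x _).mpr ((isOptimal_iff_le_xstar hA hk hk_sum).mp hx).2 i
  rw [glb_eq_bot hj hij, le_bot_iff] at objF_le
  exact objF_ne_bot hil x objF_le

theorem IsOptimal.eq_xstar (hA : ∀ i j, A i j ≠ ⊤) (hA_ne : ∃ i j, A i j ≠ ⊥)
    (hk : ∀ j, 0 ≤ k j) (hk_sum : 0 < ∑ j, k j) {x : Fin n → ℝ} (hx : IsOptimal A k c x)
    {j : Fin n} (hj : 0 < k j) : (x j : EReal) = xstar A (glb A k c) j := by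
  obtain ⟨i, l, hil⟩ := hA_ne
  obtain ⟨hx_mem, hx_le⟩ := (isOptimal_iff_le_xstar hA hk hk_sum).mp hx
  by_contra hne
  obtain ⟨t, hxt, ht⟩ := EReal.exists_between_coe_real ((hx_le j).lt_of_ne hne)
  have update_le : ∀ l, (Function.update x j t l : EReal) ≤ xstar A (glb A k c) l := fun l => by
    rcases eq_or_ne l j with rfl | hl
    · rw [Function.update_self]
      exact ht.le
    · rw [Function.update_of_ne hl]
      exact hx_le l
  have sum_le : ∑ l, k l * Function.update x j t l ≤ c :=
    sum_mul_le_of_le_xstar hA hk hk_sum (fun _ => hx.ne_bot_of_pos hA hk hk_sum hil) update_le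
  rw [sum_mul_update, mem_constraintSet.mp hx_mem] at sum_le
  have gain_pos : 0 < k j * (t - x j) := mul_pos hj (sub_pos.mpr (EReal.coe_lt_coe_iff.mp hxt))
  linarith

end Optimality

theorem stmt_18_general {m n : ℕ}
    (A : Matrix (Fin m) (Fin n) EReal) (hA : ∀ i j, A i j ≠ ⊤) (hA_ne : ∃ i j, A i j ≠ ⊥)
    (k : Fin n → ℝ) (hk : ∀ j, 0 ≤ k j) (hk0 : ∃ j, k j ≠ 0) (c : ℝ)
    (hsolv : ∃ xt : Fin n → ℝ, IsOptimal A k c xt) (xt : Fin n → ℝ) :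
    IsOptimal A k c xt ↔
      ((∀ j, k j = 0 → (xt j : EReal) ≤ xstar A (glb A k c) j) ∧
       (∀ j, 0 < k j → (xt j : EReal) = xstar A (glb A k c) j)) := by
  have hk_sum : 0 < ∑ j, k j :=
    Fintype.sum_pos (lt_of_le_of_ne hk fun h => hk0.elim fun j hj => hj (congrFun h j).symm)
  constructor
  · intro hxt
    exact ⟨fun j _ => ((isOptimal_iff_le_xstar hA hk hk_sum).mp hxt).2 j,
      fun j hj => hxt.eq_xstar hA hA_ne hk hk_sum hj⟩
  · rintro ⟨le_of_zero, eq_of_pos⟩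
    obtain ⟨y, hy⟩ := hsolv
    have same_weighted_sum : ∑ j, k j * xt j = ∑ j, k j * y j :=
      Finset.sum_congr rfl fun j _ => by
        rcases (hk j).eq_or_lt' with hj | hj
        · simp only [hj, zero_mul]
        · rw [EReal.coe_eq_coe_iff.mp
            ((eq_of_pos j hj).trans (hy.eq_xstar hA hA_ne hk hk_sum hj).symm)]
    refine (isOptimal_iff_le_xstar hA hk hk_sum).mpr ⟨same_weighted_sum.trans hy.1, fun j => ?_⟩
    exact (hk j).eq_or_lt'.elim (le_of_zero j) fun hj => (eq_of_pos j hj).le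

theorem stmt_18 {m n : ℕ} (hm : 1 ≤ m) (hn : 1 ≤ n)
    (A : Matrix (Fin m) (Fin n) EReal) (hA : ∀ i j, A i j ≠ ⊤)
    (k : Fin n → ℝ) (hk : ∀ j, 0 ≤ k j) (hk0 : ∃ j, k j ≠ 0) (c : ℝ)
    (hrow : ∀ i, ∃ j, A i j ≠ ⊥)
    (hcol : ∀ j, (∀ i, A i j = ⊥) → 0 < k j)
    (hsolv : ∃ xt : Fin n → ℝ, IsOptimal A k c xt) :
    ∀ xt : Fin n → ℝ, IsOptimal A k c xt ↔
      ((∀ j, k j = 0 → (xt j : EReal) ≤ xstar A (glb A k c) j) ∧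
       (∀ j, 0 < k j → (xt j : EReal) = xstar A (glb A k c) j)) :=
  stmt_18_general A hA ⟨⟨0, hm⟩, hrow ⟨0, hm⟩⟩ k hk hk0 c hsolv
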